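/- arXiv:math/0012031 — 2 statements merged into one kernel-verified Lean document; each statement's English description precedes it below -/
import Mathlib

section
/- Let A be an associative ring with 1, let M₀ and M₁ be n×n matrices over A, and consider the linear matrix M₀ + X·M₁ with entries in the polynomial ring A[X] (embedding M₀, M₁ entrywise via the constant-coefficient inclusion A → A[X]). Then M₀ + X·M₁ is invertible in the ring of n×n matrices over A[X] if and only if M₀ is invertible over A and the matrix M₀⁻¹·M₁ is nilpotent. -/
/-!
A matrix of polynomials is a polynomial with matrix coefficients, so the question becomes when
`C a + X * C b` is invertible in `R[X]`, for a not necessarily commutative ring `R`. Its constant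
coefficient `a` must be invertible, and dividing it out leaves `1 - X * C c` with `c = -(a⁻¹ * b)`.
The only possible inverse of the latter is the geometric series `∑ cᵏ Xᵏ`, which is a polynomial
exactly when `c` is nilpotent.
-/

open Polynomial

section LinearPolynomial

variable {R : Type*} [Ring R]

theorem coeff_eq_pow_of_one_sub_X_mul_C_mul_eq_one {c : R} {p : R[X]}
    (hp : (1 - X * C c) * p = 1) (k : ℕ) : p.coeff k = c ^ k := by
  have p_eq : p = 1 + X * (C c * p) := by
    rw [sub_mul, one_mul, mul_assoc] at hp
    exact sub_eq_iff_eq_add.mp hp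
  induction k with
  | zero => rw [p_eq, coeff_add, coeff_one_zero, coeff_X_mul_zero, add_zero, pow_zero]
  | succ k ih =>
    calc p.coeff (k + 1) = (1 + X * (C c * p)).coeff (k + 1) := congrArg (coeff · (k + 1)) p_eq
      _ = c * p.coeff k := by simp [coeff_one]
      _ = c ^ (k + 1) := by rw [ih, pow_succ']

theorem isUnit_one_sub_X_mul_C_iff {c : R} : IsUnit (1 - X * C c) ↔ IsNilpotent c := by
  constructor
  · intro h
    obtain ⟨p, hp⟩ := h.exists_right_inv
    refine ⟨p.natDegree + 1, ?_⟩
    rw [← coeff_eq_pow_of_one_sub_X_mul_C_mul_eq_one hp]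
    exact coeff_eq_zero_of_natDegree_lt p.natDegree.lt_succ_self
  · intro hc
    exact ((commute_X (C c)).isNilpotent_mul_left (hc.map C)).isUnit_one_sub

theorem isUnit_C_units_add_X_mul_C_iff (u : Rˣ) {b : R} :
    IsUnit (C (u : R) + X * C b) ↔ IsNilpotent (↑u⁻¹ * b) := by
  have factorization : C (u : R) + X * C b = C (u : R) * (1 - X * C (-(↑u⁻¹ * b))) :=
    calc C (u : R) + X * C b = C (u : R) + X * C (u * (↑u⁻¹ * b)) := by rw [u.mul_inv_cancel_left]
      _ = C (u : R) + C (u : R) * (X * C (↑u⁻¹ * b)) := by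
        rw [C_mul, ← mul_assoc, X_mul_C, mul_assoc]
      _ = C (u : R) * (1 - X * C (-(↑u⁻¹ * b))) := by
        rw [C_neg, mul_neg, sub_neg_eq_add, mul_add, mul_one]
  rw [factorization, ← isNilpotent_neg_iff, ← isUnit_one_sub_X_mul_C_iff]
  exact Units.isUnit_units_mul (Units.map C.toMonoidHom u) _

theorem isUnit_C_add_X_mul_C_iff {a b : R} :
    IsUnit (C a + X * C b) ↔ ∃ u : Rˣ, u = a ∧ IsNilpotent (↑u⁻¹ * b) := by
  constructor
  · intro h
    obtain ⟨u, rfl⟩ : IsUnit a := by simpa using h.map constantCoeff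
    exact ⟨u, rfl, (isUnit_C_units_add_X_mul_C_iff u).mp h⟩
  · rintro ⟨u, rfl, hu⟩
    exact (isUnit_C_units_add_X_mul_C_iff u).mpr hu

end LinearPolynomial

section MatrixPolynomial

variable {A ι : Type*} [Semiring A] [Fintype ι] [DecidableEq ι]

/-- The ring homomorphism `∑ Mₖ Xᵏ ↦ ∑ Xᵏ • Mₖ` from polynomials over a matrix ring to matrices of
polynomials, for a coefficient semiring that need not be commutative (unlike in `matPolyEquiv`). -/
noncomputable def polynomialMatrixToMatrix : (Matrix ι ι A)[X] →+* Matrix ι ι A[X] :=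
  eval₂RingHom' C.mapMatrix (Matrix.scalar ι X) fun M ↦
    (Matrix.scalar_commute X commute_X (C.mapMatrix M)).symm

theorem polynomialMatrixToMatrix_monomial (k : ℕ) (M : Matrix ι ι A) :
    polynomialMatrixToMatrix (monomial k M) = M.map (monomial k) := by
  ext i j : 2
  simp [polynomialMatrixToMatrix, eval₂_monomial, Matrix.diagonal_pow, C_mul_X_pow_eq_monomial]

theorem coeff_polynomialMatrixToMatrix (p : (Matrix ι ι A)[X]) (i j : ι) (k : ℕ) :
    (polynomialMatrixToMatrix p i j).coeff k = p.coeff k i j := by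
  induction p using Polynomial.induction_on' with
  | add p q hp hq => simp only [map_add, Matrix.add_apply, coeff_add, hp, hq]
  | monomial m M =>
    rw [polynomialMatrixToMatrix_monomial, Matrix.map_apply, coeff_monomial, coeff_monomial]
    split_ifs <;> rfl

theorem polynomialMatrixToMatrix_bijective :
    Function.Bijective (polynomialMatrixToMatrix : (Matrix ι ι A)[X] →+* Matrix ι ι A[X]) := by
  constructor
  · intro p q hpq
    ext k i j
    rw [← coeff_polynomialMatrixToMatrix, hpq, coeff_polynomialMatrixToMatrix]
  · rw [← RingHom.rangeS_eq_top, eq_top_iff]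
    intro M _
    induction M using Matrix.induction_on' with
    | h_zero => exact zero_mem _
    | h_add M N hM hN => exact add_mem (hM trivial) (hN trivial)
    | h_std_basis i j p =>
      induction p using Polynomial.induction_on' with
      | add p q hp hq =>
        rw [Matrix.single_add]
        exact add_mem (hp trivial) (hq trivial)
      | monomial k a =>
        refine ⟨monomial k (Matrix.single i j a), ?_⟩
        rw [polynomialMatrixToMatrix_monomial, Matrix.map_single]

theorem polynomialMatrixToMatrix_C_add_X_mul_C (M₀ M₁ : Matrix ι ι A) :
    polynomialMatrixToMatrix (C M₀ + X * C M₁) = M₀.map C + (X : A[X]) • M₁.map C := by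
  ext i j : 2
  simp [polynomialMatrixToMatrix]

end MatrixPolynomial

theorem linear_matrix_isUnit_iff_general {A ι : Type*} [Ring A] [Fintype ι] [DecidableEq ι]
    (M₀ M₁ : Matrix ι ι A) :
    IsUnit (M₀.map C + (X : A[X]) • M₁.map C) ↔
      ∃ u : (Matrix ι ι A)ˣ, u.val = M₀ ∧ IsNilpotent ((u⁻¹).val * M₁) := by
  rw [← polynomialMatrixToMatrix_C_add_X_mul_C, ← isUnit_C_add_X_mul_C_iff]
  exact MulEquiv.isUnit_map (RingEquiv.ofBijective _ polynomialMatrixToMatrix_bijective)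

theorem linear_matrix_isUnit_iff (A : Type*) [Ring A] (n : ℕ)
    (M₀ M₁ : Matrix (Fin n) (Fin n) A) :
    IsUnit (M₀.map Polynomial.C + (Polynomial.X : Polynomial A) • M₁.map Polynomial.C) ↔
      ∃ u : (Matrix (Fin n) (Fin n) A)ˣ, u.val = M₀ ∧ IsNilpotent ((u⁻¹).val * M₁) :=
  linear_matrix_isUnit_iff_general M₀ M₁
end

section
/- Let A be an associative ring with 1 and let M be an invertible n×n matrix over the Laurent polynomial ring A[z,z⁻¹]. Let a, b, a', b' be natural numbers such that the entries of z^a·M and z^{a'}·M⁻¹ lie in A[z], and the entries of z^{-b}·M and z^{-b'}·M⁻¹ lie in A[z⁻¹]. Define P₊ as the quotient of A[z]^n by the right A[z]-submodule { (z^a·M)·v : v ∈ A[z]^n }, and P₋ as the quotient of A[z⁻¹]^n by the right A[z⁻¹]-submodule { (z^{-b}·M)·v : v ∈ A[z⁻¹]^n }. Then: (1) multiplication by z descends to a well-defined right A-linear endomorphism ν₊ of P₊ satisfying (ν₊)^{a+a'} = 0; (2) multiplication by z⁻¹ descends to a well-defined right A-linear endomorphism ν₋ of P₋ satisfying (ν₋)^{b+b'}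 = 0; (3) P₊ ⊕ P₋ is isomorphic as a right A-module to the free right A-module A^{n(a+b)}, so in particular P₊ and P₋ are finitely generated projective right A-modules. -/
/-- The embedding of `A[z⁻¹]` (modelled as polynomials in `z⁻¹`) into the Laurent
polynomial ring `A[z,z⁻¹]`, sending the variable to `T (-1) = z⁻¹`. -/
noncomputable def PolynomialInvToLaurent (A : Type*) [Ring A] :
    Polynomial A →+* LaurentPolynomial A :=
  (AddMonoidAlgebra.mapDomainRingHom A (negAddMonoidHom : ℤ →+ ℤ)).comp
    Polynomial.toLaurent

/-!
For a finite index set `m`, the map `σ(p, q) = z¹⁻ᵃ p(z) + zᵇ q(z⁻¹)` from `A[z]^m × A[z⁻¹]^m` to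
`A[z, z⁻¹]^m` knows both cokernels, because `coker φ × coker ψ ≅ ker σ` whenever `σ ∘ (φ × ψ)` is
bijective. Let `τ(p, q) = z p(z) + q(z⁻¹)`, which is bijective because a Laurent polynomial splits
uniquely into its parts of positive and of nonpositive degree. Both `σ ∘ (zᵃM × z⁻ᵇM) = M ∘ τ` and
`σ ∘ (zᵃ × z⁻ᵇ) = τ` are bijective, so `P₊ × P₋ ≅ A[z]^m / zᵃ × A[z⁻¹]^m / z⁻ᵇ`, which is free of
rank `|m| (a + b)`. The nilpotency bounds come from `(z^a M) (z^{a'} M⁻¹) = z^{a + a'}`, which shows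
that `z^{a + a'}` annihilates `P₊`, and likewise for `P₋`.
-/

open LaurentPolynomial (T)
open scoped Polynomial LaurentPolynomial Matrix

section LinearAlgebra

variable {R E E' F F' G : Type*} [Ring R] [AddCommGroup E] [Module R E] [AddCommGroup E']
  [Module R E'] [AddCommGroup F] [Module R F] [AddCommGroup F'] [Module R F'] [AddCommGroup G]
  [Module R G]

theorem bijective_mkQ_prodMap_comp_subtype_ker (φ : E →ₗ[R] F) (ψ : E' →ₗ[R] F')
    (σ : F × F' →ₗ[R] G) (h : Function.Bijective (σ ∘ₗ φ.prodMap ψ)) :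
    Function.Bijective ((φ.range.mkQ.prodMap ψ.range.mkQ) ∘ₗ σ.ker.subtype) := by
  constructor
  · rw [injective_iff_map_eq_zero]
    rintro ⟨⟨x, y⟩, hxy⟩ hmk
    obtain ⟨⟨u, rfl⟩, ⟨v, rfl⟩⟩ : x ∈ φ.range ∧ y ∈ ψ.range := by simpa using hmk
    have huv : (u, v) = 0 := h.1 (by rw [map_zero]; exact hxy)
    obtain ⟨rfl, rfl⟩ := Prod.mk_eq_zero.1 huv
    simp
  · rintro ⟨x, y⟩
    obtain ⟨x, rfl⟩ := φ.range.mkQ_surjective x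
    obtain ⟨y, rfl⟩ := ψ.range.mkQ_surjective y
    obtain ⟨w, hw⟩ := h.2 (σ (x, y))
    refine ⟨⟨(x, y) - φ.prodMap ψ w, ?_⟩, ?_⟩
    · rw [LinearMap.mem_ker, map_sub, sub_eq_zero]
      exact hw.symm
    · simp [Submodule.Quotient.mk_sub, (Submodule.Quotient.mk_eq_zero _).2]

/-- If `σ ∘ (φ × ψ)` is bijective, then `coker φ × coker ψ` is isomorphic to `ker σ`; in particular
it depends on `σ` only. -/
noncomputable def cokerProdEquivKer (φ : E →ₗ[R] F) (ψ : E' →ₗ[R] F') (σ : F × F' →ₗ[R] G)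
    (h : Function.Bijective (σ ∘ₗ φ.prodMap ψ)) :
    ((F ⧸ φ.range) × (F' ⧸ ψ.range)) ≃ₗ[R] σ.ker :=
  (LinearEquiv.ofBijective _ (bijective_mkQ_prodMap_comp_subtype_ker φ ψ σ h)).symm

theorem finite_and_projective_of_prod_equiv [Module.Finite R F] [Module.Projective R F]
    (e : (E × E') ≃ₗ[R] F) : Module.Finite R E ∧ Module.Projective R E :=
  ⟨.of_surjective (.fst R E E' ∘ₗ e.symm.toLinearMap)
      ((LinearMap.fst_surjective (R := R)).comp e.symm.surjective),
    .of_split (e.toLinearMap ∘ₗ .inl R E E') (.fst R E E' ∘ₗ e.symm.toLinearMap) (by ext; simp)⟩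

instance finite_mulOpposite_self (A : Type*) [Ring A] : Module.Finite Aᵐᵒᵖ A :=
  .equiv (MulOpposite.opLinearEquiv Aᵐᵒᵖ : A ≃ₗ[Aᵐᵒᵖ] Aᵐᵒᵖ).symm

instance free_mulOpposite_self (A : Type*) [Ring A] : Module.Free Aᵐᵒᵖ A :=
  .of_equiv (MulOpposite.opLinearEquiv Aᵐᵒᵖ : A ≃ₗ[Aᵐᵒᵖ] Aᵐᵒᵖ).symm

end LinearAlgebra

section Matrix

variable {R m n : Type*} [Fintype n] [DecidableEq m]

theorem exists_nilpotent_end_coker_mulVec {S : Type*} [Finite m] [Ring R] [Ring S] [Module S R]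
    [SMulCommClass S R R] {x : R} (hx : ∀ r, Commute x r) {k : ℕ} (N : Matrix m n R)
    (N' : Matrix n m R) (h : N * N' = x ^ k • (1 : Matrix m m R)) :
    ∃ ν : Module.End S ((m → R) ⧸ (Matrix.mulVecBilin ℤ S N).range),
      (∀ v : m → R, ν (Submodule.Quotient.mk v) = Submodule.Quotient.mk (x • v)) ∧
        ν ^ k = 0 := by
  have : SMulCommClass R S R := .symm S R R
  have := Fintype.ofFinite m
  let μ : Module.End S (m → R) := DistribSMul.toLinearMap S (m → R) x
  have hμ : (Matrix.mulVecBilin ℤ S N).range ≤ (Matrix.mulVecBilin ℤ S N).range.comap μ := by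
    rintro _ ⟨v, rfl⟩
    refine ⟨x • v, funext fun i => ?_⟩
    simp [μ, Matrix.mulVec, dotProduct, Finset.mul_sum, (hx _).left_comm]
  have hμ_pow (v : m → R) : (μ ^ k) v = N *ᵥ (N' *ᵥ v) := by
    rw [Matrix.mulVec_mulVec, h, Matrix.smul_mulVec, Matrix.one_mulVec, Module.End.pow_apply]
    exact smul_iterate_apply x k v
  refine ⟨Submodule.mapQ _ _ μ hμ, fun _ => rfl, ?_⟩
  rw [← Submodule.mapQ_pow]
  refine Submodule.linearMap_qext _ (LinearMap.ext fun v => ?_)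
  exact (Submodule.Quotient.mk_eq_zero _).2 (LinearMap.mem_range.2 ⟨N' *ᵥ v, (hμ_pow v).symm⟩)

theorem mul_eq_smul_one_of_map {L : Type*} [Semiring R] [Semiring L] {φ : R →+* L}
    (hφ : Function.Injective φ) {r : R} {u u' : L} (hu' : ∀ y, Commute u' y) (hr : φ r = u * u')
    {M : Matrix m n L} {M' : Matrix n m L} (hMM' : M * M' = 1) {N : Matrix m n R}
    {N' : Matrix n m R} (hN : u • M = N.map φ) (hN' : u' • M' = N'.map φ) :
    N * N' = r • (1 : Matrix m m R) := by
  have hcomm : M * (u' • M') = u' • (M * M') := by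
    ext i j
    simp only [Matrix.mul_apply, Matrix.smul_apply, smul_eq_mul, Finset.mul_sum,
      (hu' _).left_comm]
  apply Matrix.map_injective hφ
  calc (N * N').map φ = (u • M) * (u' • M') := by rw [Matrix.map_mul, hN, hN']
    _ = (u * u') • (1 : Matrix m m L) := by rw [Matrix.smul_mul, hcomm, hMM', smul_smul]
    _ = (r • (1 : Matrix m m R)).map φ := by
      rw [← hr]
      ext i j
      simp [Matrix.one_apply, apply_ite φ]

theorem mulVec_bijective_of_mul_eq_one [Fintype m] [DecidableEq n] [Semiring R]
    {M : Matrix m n R} {M' : Matrix n m R} (hMM' : M * M' = 1) (hM'M : M' * M = 1) :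
    Function.Bijective (M *ᵥ ·) :=
  Function.bijective_iff_has_inverse.2
    ⟨(M' *ᵥ ·), fun v => by simp [hM'M], fun v => by simp [hMM']⟩

end Matrix

section Polynomial

variable {A ι : Type*} [Ring A]

instance polynomial_smulCommClass_self {A S : Type*} [Semiring A] [DistribSMul S A]
    [SMulCommClass S A A] : SMulCommClass S A[X] A[X] where
  smul_comm s p q := by
    ext k
    simp [Polynomial.coeff_mul, Finset.smul_sum, mul_smul_comm]

instance polynomial_self_smulCommClass {A S : Type*} [Semiring A] [DistribSMul S A]
    [SMulCommClass S A A] : SMulCommClass A[X] S A[X] :=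
  .symm S A[X] A[X]

/-- The coefficients of degree less than `a` of a vector of polynomials, as a map of right
`A`-modules. -/
def coeffsBelow (A ι : Type*) [Ring A] (a : ℕ) : (ι → A[X]) →ₗ[Aᵐᵒᵖ] (ι × Fin a → A) where
  toFun p ik := (p ik.1).coeff ik.2
  map_add' _ _ := by ext; simp
  map_smul' _ _ := by ext; simp

theorem coeffsBelow_surjective (a : ℕ) : Function.Surjective (coeffsBelow A ι a) := fun f =>
  ⟨fun i => ∑ k : Fin a, Polynomial.monomial k (f (i, k)), by
    ext ⟨i, k⟩
    simp [coeffsBelow, Polynomial.coeff_monomial, Fin.val_inj]⟩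

theorem ker_coeffsBelow (a : ℕ) : (coeffsBelow A ι a).ker =
    (DistribSMul.toLinearMap Aᵐᵒᵖ (ι → A[X]) (Polynomial.X ^ a : A[X])).range := by
  ext p
  calc p ∈ (coeffsBelow A ι a).ker ↔ ∀ i, Polynomial.X ^ a ∣ p i := by
        simp [coeffsBelow, funext_iff, Polynomial.X_pow_dvd_iff, Fin.forall_iff]
    _ ↔ _ := by
        simp [funext_iff, dvd_def, Classical.skolem, eq_comm]

/-- `A[X]^ι / X^a A[X]^ι` is the free right `A`-module on `ι × Fin a`. -/
noncomputable def cokerXPowEquiv (A ι : Type*) [Ring A] (a : ℕ) :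
    ((ι → A[X]) ⧸ (DistribSMul.toLinearMap Aᵐᵒᵖ (ι → A[X]) (Polynomial.X ^ a : A[X])).range)
      ≃ₗ[Aᵐᵒᵖ] (ι × Fin a → A) :=
  Submodule.quotEquivOfEq _ _ (ker_coeffsBelow a).symm ≪≫ₗ
    LinearMap.quotKerEquivOfSurjective _ (coeffsBelow_surjective a)

end Polynomial

section Laurent

variable {A ι : Type*} [Ring A]

theorem coeff_toLaurent_natCast (p : A[X]) (k : ℕ) : p.toLaurent.coeff (k : ℤ) = p.coeff k := by
  rw [LaurentPolynomial.coeff_toLaurent]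
  exact Finsupp.mapDomain_apply Nat.castEmbedding.injective _ k

theorem coeff_toLaurent_of_neg (p : A[X]) {k : ℤ} (hk : k < 0) : p.toLaurent.coeff k = 0 := by
  rw [LaurentPolynomial.coeff_toLaurent]
  exact Finsupp.mapDomain_of_notMem_range _ _ (by rintro ⟨j, rfl⟩; simp at hk; omega)

theorem coeff_polynomialInvToLaurent (p : A[X]) (k : ℤ) :
    (PolynomialInvToLaurent A p).coeff k = p.toLaurent.coeff (-k) := by
  rw [← neg_neg k, neg_neg (-k)]
  exact Finsupp.mapDomain_apply (neg_injective (G := ℤ)) p.toLaurent.coeff (-k)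

theorem coeff_T_mul (i k : ℤ) (f : A[T;T⁻¹]) : (T i * f).coeff k = f.coeff (k - i) := by
  rw [T, AddMonoidAlgebra.coeff_single_mul_apply, one_mul, neg_add_eq_sub]

theorem polynomialInvToLaurent_injective : Function.Injective (PolynomialInvToLaurent A) := by
  intro p q h
  ext k
  simpa only [coeff_polynomialInvToLaurent, neg_neg, coeff_toLaurent_natCast] using
    congrArg (fun f => f.coeff (-(k : ℤ))) h

theorem polynomialInvToLaurent_monomial (k : ℕ) (r : A) :
    PolynomialInvToLaurent A (.monomial k r) = LaurentPolynomial.C r * T (-k) := by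
  simp only [PolynomialInvToLaurent, RingHom.comp_apply, Polynomial.toLaurent_C_mul_T,
    ← LaurentPolynomial.single_eq_C_mul_T]
  simp [-LaurentPolynomial.single_eq_C_mul_T]

theorem polynomialInvToLaurent_X_pow (k : ℕ) :
    PolynomialInvToLaurent A (Polynomial.X ^ k) = T (-k) := by
  simpa [Polynomial.monomial_one_right_eq_X_pow] using polynomialInvToLaurent_monomial k (1 : A)

theorem toLaurent_op_smul (c : Aᵐᵒᵖ) (p : A[X]) : (c • p).toLaurent = c • p.toLaurent := by
  ext k
  rcases lt_or_ge k 0 with hk | hk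
  · simp only [AddMonoidAlgebra.coeff_smul, Finsupp.smul_apply, coeff_toLaurent_of_neg _ hk,
      smul_zero]
  · lift k to ℕ using hk
    simp only [AddMonoidAlgebra.coeff_smul, Finsupp.smul_apply, coeff_toLaurent_natCast,
      Polynomial.coeff_smul]

theorem polynomialInvToLaurent_op_smul (c : Aᵐᵒᵖ) (p : A[X]) :
    PolynomialInvToLaurent A (c • p) = c • PolynomialInvToLaurent A p := by
  ext k
  simp only [AddMonoidAlgebra.coeff_smul, Finsupp.smul_apply, coeff_polynomialInvToLaurent,
    toLaurent_op_smul]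

/-- The map `(p, q) ↦ zⁱ p(z) + zʲ q(z⁻¹)` on vectors indexed by `ι`: up to sign, the Čech
differential, for the standard cover of the projective line over `A`, of a direct sum of `ι`
copies of a twist of the structure sheaf. -/
noncomputable def cechMap (A ι : Type*) [Ring A] (i j : ℤ) :
    (ι → A[X]) × (ι → A[X]) →ₗ[Aᵐᵒᵖ] (ι → A[T;T⁻¹]) where
  toFun pq k := T i * (pq.1 k).toLaurent + T j * PolynomialInvToLaurent A (pq.2 k)
  map_add' x y := by
    ext1 k
    simp only [Prod.fst_add, Prod.snd_add, Pi.add_apply, map_add, mul_add]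
    abel
  map_smul' c x := by
    ext1 k
    simp only [Prod.smul_fst, Prod.smul_snd, Pi.smul_apply, toLaurent_op_smul,
      polynomialInvToLaurent_op_smul, mul_smul_comm, smul_add, RingHom.id_apply]

theorem cechMap_one_zero_injective : Function.Injective (cechMap A ι 1 0) := by
  rw [injective_iff_map_eq_zero]
  rintro ⟨p, q⟩ h
  have hcoeff (i : ι) (k : ℤ) : (p i).toLaurent.coeff (k - 1) + (q i).toLaurent.coeff (-k) = 0 := by
    simpa only [cechMap, LinearMap.coe_mk, AddHom.coe_mk, AddMonoidAlgebra.coeff_add,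
      Finsupp.add_apply, coeff_T_mul, coeff_polynomialInvToLaurent, sub_zero, Pi.zero_apply,
      AddMonoidAlgebra.coeff_zero, Finsupp.zero_apply] using
      congrArg (fun f => (f i).coeff k) h
  ext i k
  · have := hcoeff i (k + 1)
    rwa [add_sub_cancel_right, coeff_toLaurent_natCast, coeff_toLaurent_of_neg (q i) (by omega),
      add_zero] at this
  · have := hcoeff i (-k)
    rwa [neg_neg, coeff_toLaurent_natCast, coeff_toLaurent_of_neg (p i) (by omega),
      zero_add] at this

theorem exists_T_one_mul_toLaurent_add_polynomialInvToLaurent (f : A[T;T⁻¹]) :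
    ∃ p q : A[X], T 1 * p.toLaurent + PolynomialInvToLaurent A q = f := by
  induction f using LaurentPolynomial.induction_on' with
  | add f g hf hg =>
    obtain ⟨p, q, rfl⟩ := hf
    obtain ⟨p', q', rfl⟩ := hg
    exact ⟨p + p', q + q', by simp only [map_add, mul_add]; abel⟩
  | C_mul_T k r =>
    obtain hk | hk := le_or_gt k 0
    · obtain ⟨d, rfl⟩ := Int.exists_eq_neg_ofNat hk
      exact ⟨0, .monomial d r, by simp [polynomialInvToLaurent_monomial]⟩
    · obtain ⟨d, rfl⟩ := Int.eq_succ_of_zero_lt hk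
      refine ⟨.monomial d r, 0, ?_⟩
      rw [Polynomial.toLaurent_C_mul_T, map_zero, add_zero, LaurentPolynomial.T_mul,
        LaurentPolynomial.mul_T_assoc]

theorem cechMap_one_zero_bijective : Function.Bijective (cechMap A ι 1 0) := by
  refine ⟨cechMap_one_zero_injective, fun f => ?_⟩
  choose p q hpq using fun i => exists_T_one_mul_toLaurent_add_polynomialInvToLaurent (f i)
  exact ⟨(p, q), funext fun i => by simpa [cechMap] using hpq i⟩

theorem cechMap_comp_smul_X_pow (a b : ℕ) :
    cechMap A ι (1 - a) b ∘ₗ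
      (DistribSMul.toLinearMap Aᵐᵒᵖ (ι → A[X]) (Polynomial.X ^ a : A[X])).prodMap
        (DistribSMul.toLinearMap Aᵐᵒᵖ (ι → A[X]) (Polynomial.X ^ b : A[X])) =
      cechMap A ι 1 0 := by
  refine LinearMap.ext fun ⟨p, q⟩ => funext fun i => ?_
  simp only [cechMap, LinearMap.comp_apply, LinearMap.prodMap_apply, DistribSMul.toLinearMap_apply,
    LinearMap.coe_mk, AddHom.coe_mk, Pi.smul_apply, smul_eq_mul, map_mul,
    Polynomial.toLaurent_X_pow, polynomialInvToLaurent_X_pow, ← mul_assoc,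
    ← LaurentPolynomial.T_add, sub_add_cancel, add_neg_cancel]

theorem cechMap_mulVec {m n : Type*} [Fintype n] {a b : ℤ} {M : Matrix m n A[T;T⁻¹]}
    {Npos Nneg : Matrix m n A[X]}
    (hNpos : (T a : A[T;T⁻¹]) • M = Npos.map Polynomial.toLaurent)
    (hNneg : (T (-b) : A[T;T⁻¹]) • M = Nneg.map (PolynomialInvToLaurent A)) (p q : n → A[X]) :
    cechMap A m (1 - a) b (Npos *ᵥ p, Nneg *ᵥ q) = M *ᵥ cechMap A n 1 0 (p, q) := by
  ext1 i
  calc T (1 - a) * ((Npos *ᵥ p) i).toLaurent + T b * PolynomialInvToLaurent A ((Nneg *ᵥ q) i)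
      = T 1 * (M *ᵥ (Polynomial.toLaurent ∘ p)) i
          + T 0 * (M *ᵥ (PolynomialInvToLaurent A ∘ q)) i := by
        simp only [RingHom.map_mulVec, ← hNpos, ← hNneg, Matrix.smul_mulVec, Pi.smul_apply,
          smul_eq_mul, ← mul_assoc, ← LaurentPolynomial.T_add, sub_add_cancel, add_neg_cancel]
    _ = (M *ᵥ cechMap A n 1 0 (p, q)) i := by
        simp only [cechMap, LinearMap.coe_mk, AddHom.coe_mk, Matrix.mulVec, dotProduct, mul_add,
          Finset.sum_add_distrib, Finset.mul_sum, Function.comp_apply,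
          (LaurentPolynomial.commute_T _ _).left_comm]

end Laurent

section Cokernel

variable {A m n : Type*} [Ring A] [Fintype n]

/-- The right `A`-module `A[X]^m / N A[X]^n`: the paper's `P₊` for `N = zᵃM`, and its `P₋`, with
`X` standing for `z⁻¹`, for `N = z⁻ᵇM`. -/
abbrev PolynomialCokernel (N : Matrix m n A[X]) : Type _ :=
  (m → A[X]) ⧸ (Matrix.mulVecBilin ℤ Aᵐᵒᵖ N).range

theorem span_mulVec_eq_range (N : Matrix m n A[X]) :
    Submodule.span Aᵐᵒᵖ {w : m → A[X] | ∃ v, w = N *ᵥ v} =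
      (Matrix.mulVecBilin ℤ Aᵐᵒᵖ N).range := by
  rw [← Submodule.span_eq (Matrix.mulVecBilin ℤ Aᵐᵒᵖ N).range]
  congr 1
  ext w
  simp [eq_comm]

theorem nonempty_polynomialCokernel_prod_equiv [Fintype m] [DecidableEq m] [DecidableEq n]
    (a b : ℕ) {M : Matrix m n A[T;T⁻¹]} {M' : Matrix n m A[T;T⁻¹]}
    (hMM' : M * M' = 1) (hM'M : M' * M = 1)
    {Npos Nneg : Matrix m n A[X]}
    (hNpos : (T (a : ℤ) : A[T;T⁻¹]) • M = Npos.map Polynomial.toLaurent)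
    (hNneg : (T (-(b : ℤ)) : A[T;T⁻¹]) • M = Nneg.map (PolynomialInvToLaurent A)) :
    Nonempty ((PolynomialCokernel Npos × PolynomialCokernel Nneg) ≃ₗ[Aᵐᵒᵖ]
      (Fin (Fintype.card m * (a + b)) → A)) := by
  let σ := cechMap A m (1 - a) b
  have hσN : Function.Bijective
      (σ ∘ₗ (Matrix.mulVecBilin ℤ Aᵐᵒᵖ Npos).prodMap (Matrix.mulVecBilin ℤ Aᵐᵒᵖ Nneg)) := by
    convert (mulVec_bijective_of_mul_eq_one hMM' hM'M).comp cechMap_one_zero_bijective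
    exact funext fun pq => cechMap_mulVec hNpos hNneg pq.1 pq.2
  have hσX := cechMap_comp_smul_X_pow (A := A) (ι := m) a b ▸ cechMap_one_zero_bijective
  let index : m × Fin a ⊕ m × Fin b ≃ Fin (Fintype.card m * (a + b)) :=
    (Equiv.prodSumDistrib m (Fin a) (Fin b)).symm.trans <|
      ((Fintype.equivFin m).prodCongr finSumFinEquiv).trans finProdFinEquiv
  exact ⟨cokerProdEquivKer _ _ σ hσN ≪≫ₗ (cokerProdEquivKer _ _ σ hσX).symm ≪≫ₗ
    (cokerXPowEquiv A m a).prodCongr (cokerXPowEquiv A m b) ≪≫ₗ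
    (LinearEquiv.sumArrowLequivProdArrow _ _ Aᵐᵒᵖ A).symm ≪≫ₗ
    LinearEquiv.funCongrLeft Aᵐᵒᵖ A index.symm⟩

end Cokernel

-- Over a ring without invariant basis number, invertible matrices need not be square.
theorem laurent_cokernels_nilpotent_and_fg_projective_general {A m n : Type*} [Ring A]
    [Fintype m] [Fintype n] [DecidableEq m] [DecidableEq n] (a b a' b' : ℕ)
    {M : Matrix m n A[T;T⁻¹]} {M' : Matrix n m A[T;T⁻¹]} (hMM' : M * M' = 1) (hM'M : M' * M = 1)
    {Npos Nneg : Matrix m n A[X]} {Npos' Nneg' : Matrix n m A[X]}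
    (hNpos : (T (a : ℤ) : A[T;T⁻¹]) • M = Npos.map Polynomial.toLaurent)
    (hNpos' : (T (a' : ℤ) : A[T;T⁻¹]) • M' = Npos'.map Polynomial.toLaurent)
    (hNneg : (T (-(b : ℤ)) : A[T;T⁻¹]) • M = Nneg.map (PolynomialInvToLaurent A))
    (hNneg' : (T (-(b' : ℤ)) : A[T;T⁻¹]) • M' = Nneg'.map (PolynomialInvToLaurent A)) :
    (∃ νpos : Module.End Aᵐᵒᵖ (PolynomialCokernel Npos),
      (∀ v, νpos (Submodule.Quotient.mk v) =
        Submodule.Quotient.mk ((Polynomial.X : A[X]) • v)) ∧ νpos ^ (a + a') = 0) ∧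
    (∃ νneg : Module.End Aᵐᵒᵖ (PolynomialCokernel Nneg),
      (∀ v, νneg (Submodule.Quotient.mk v) =
        Submodule.Quotient.mk ((Polynomial.X : A[X]) • v)) ∧ νneg ^ (b + b') = 0) ∧
    Nonempty ((PolynomialCokernel Npos × PolynomialCokernel Nneg) ≃ₗ[Aᵐᵒᵖ]
      (Fin (Fintype.card m * (a + b)) → A)) ∧
    Module.Finite Aᵐᵒᵖ (PolynomialCokernel Npos) ∧
    Module.Projective Aᵐᵒᵖ (PolynomialCokernel Npos) ∧
    Module.Finite Aᵐᵒᵖ (PolynomialCokernel Nneg) ∧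
    Module.Projective Aᵐᵒᵖ (PolynomialCokernel Nneg) := by
  have hpos : Npos * Npos' = (Polynomial.X ^ (a + a') : A[X]) • (1 : Matrix m m A[X]) :=
    mul_eq_smul_one_of_map Polynomial.toLaurent_injective (LaurentPolynomial.commute_T _)
      (by rw [Polynomial.toLaurent_X_pow, Nat.cast_add, LaurentPolynomial.T_add]) hMM' hNpos hNpos'
  have hneg : Nneg * Nneg' = (Polynomial.X ^ (b + b') : A[X]) • (1 : Matrix m m A[X]) :=
    mul_eq_smul_one_of_map polynomialInvToLaurent_injective (LaurentPolynomial.commute_T _)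
      (by rw [polynomialInvToLaurent_X_pow, Nat.cast_add, neg_add, LaurentPolynomial.T_add])
      hMM' hNneg hNneg'
  obtain ⟨e⟩ := nonempty_polynomialCokernel_prod_equiv a b hMM' hM'M hNpos hNneg
  obtain ⟨hfin, hproj⟩ := finite_and_projective_of_prod_equiv e
  obtain ⟨hfin', hproj'⟩ :=
    finite_and_projective_of_prod_equiv (LinearEquiv.prodComm Aᵐᵒᵖ _ _ ≪≫ₗ e)
  exact ⟨exists_nilpotent_end_coker_mulVec Polynomial.commute_X _ _ hpos,
    exists_nilpotent_end_coker_mulVec Polynomial.commute_X _ _ hneg,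
    ⟨e⟩, hfin, hproj, hfin', hproj'⟩

theorem laurent_cokernels_nilpotent_and_fg_projective (A : Type*) [Ring A]
    (n a b a' b' : ℕ)
    (M M' : Matrix (Fin n) (Fin n) (LaurentPolynomial A))
    (hMM' : M * M' = 1) (hM'M : M' * M = 1)
    (Npos Npos' Nneg Nneg' : Matrix (Fin n) (Fin n) (Polynomial A))
    (hNpos : (LaurentPolynomial.T (a : ℤ) : LaurentPolynomial A) • M =
      Npos.map Polynomial.toLaurent)
    (hNpos' : (LaurentPolynomial.T (a' : ℤ) : LaurentPolynomial A) • M' =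
      Npos'.map Polynomial.toLaurent)
    (hNneg : (LaurentPolynomial.T (-(b : ℤ)) : LaurentPolynomial A) • M =
      Nneg.map (PolynomialInvToLaurent A))
    (hNneg' : (LaurentPolynomial.T (-(b' : ℤ)) : LaurentPolynomial A) • M' =
      Nneg'.map (PolynomialInvToLaurent A)) :
    -- (1) multiplication by z descends to a nilpotent endomorphism ν₊ of P₊
    (∃ νpos : ((Fin n → Polynomial A) ⧸
              Submodule.span Aᵐᵒᵖ {w : Fin n → Polynomial A | ∃ v, w = Npos.mulVec v}) →ₗ[Aᵐᵒᵖ]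
            ((Fin n → Polynomial A) ⧸
              Submodule.span Aᵐᵒᵖ {w : Fin n → Polynomial A | ∃ v, w = Npos.mulVec v}),
      (∀ v : Fin n → Polynomial A,
        νpos (Submodule.Quotient.mk v) =
          Submodule.Quotient.mk ((Polynomial.X : Polynomial A) • v)) ∧
      νpos ^ (a + a') = 0) ∧
    -- (2) multiplication by z⁻¹ descends to a nilpotent endomorphism ν₋ of P₋
    (∃ νneg : ((Fin n → Polynomial A) ⧸
              Submodule.span Aᵐᵒᵖ {w : Fin n → Polynomial A | ∃ v, w = Nneg.mulVec v}) →ₗ[Aᵐᵒᵖ]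
            ((Fin n → Polynomial A) ⧸
              Submodule.span Aᵐᵒᵖ {w : Fin n → Polynomial A | ∃ v, w = Nneg.mulVec v}),
      (∀ v : Fin n → Polynomial A,
        νneg (Submodule.Quotient.mk v) =
          Submodule.Quotient.mk ((Polynomial.X : Polynomial A) • v)) ∧
      νneg ^ (b + b') = 0) ∧
    -- (3) P₊ ⊕ P₋ is a free right A-module of rank n(a+b)
    Nonempty
      ((((Fin n → Polynomial A) ⧸
          Submodule.span Aᵐᵒᵖ {w : Fin n → Polynomial A | ∃ v, w = Npos.mulVec v}) ×
        ((Fin n → Polynomial A) ⧸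
          Submodule.span Aᵐᵒᵖ {w : Fin n → Polynomial A | ∃ v, w = Nneg.mulVec v}))
        ≃ₗ[Aᵐᵒᵖ] (Fin (n * (a + b)) → A)) ∧
    Module.Finite Aᵐᵒᵖ
      ((Fin n → Polynomial A) ⧸
        Submodule.span Aᵐᵒᵖ {w : Fin n → Polynomial A | ∃ v, w = Npos.mulVec v}) ∧
    Module.Projective Aᵐᵒᵖ
      ((Fin n → Polynomial A) ⧸
        Submodule.span Aᵐᵒᵖ {w : Fin n → Polynomial A | ∃ v, w = Npos.mulVec v}) ∧
    Module.Finite Aᵐᵒᵖ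
      ((Fin n → Polynomial A) ⧸
        Submodule.span Aᵐᵒᵖ {w : Fin n → Polynomial A | ∃ v, w = Nneg.mulVec v}) ∧
    Module.Projective Aᵐᵒᵖ
      ((Fin n → Polynomial A) ⧸
        Submodule.span Aᵐᵒᵖ {w : Fin n → Polynomial A | ∃ v, w = Nneg.mulVec v}) := by
  have h := laurent_cokernels_nilpotent_and_fg_projective_general a b a' b' hMM' hM'M
    hNpos hNpos' hNneg hNneg'
  rw [Fintype.card_fin] at h
  rwa [span_mulVec_eq_range, span_mulVec_eq_range]
end
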